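/- Discrete energy conservation for the isentropic compressible Euler equations: let d_c ∈ ℝⁿ and d_v ∈ ℝᵐ be positive weight vectors, GRAD an m×n real matrix, I (the interpolation Interp_{v←c}) an m×n real matrix, and for each t ∈ ℝ let rG(t) be an m×n real matrix and ADV(t) an m×m real matrix; set DIVr(t) := −rG(t)* = −diag(d_c)⁻¹ rG(t)ᵀ diag(d_v). Let R, Q, e_int : ℝ → ℝ be differentiable with e_int'(y) = R'(y) · Q(y) for all y ∈ ℝ. Let p : ℝ → ℝⁿ and v : ℝ → ℝᵐ be differentiable, set rho(t) := R∘p(t) (componentwise) and rv(t) := (I rho(t)) ⊙ v(t). Assume for all t: (i) rho'(t) = −DIVr(t) v(t); (ii) rv'(t) = −ADV(t) v(t) − GRAD p(t); (iii) the discrete chain rule rG(t) (Q∘p(t)) = GRAD p(t); (iv) the advection symmetry property ADV(t) + ADV(t)* = diag(I (DIVr(t) v(t))), where ADV(t)* := diag(d_v)⁻¹ ADV(t)ᵀ diag(d_v). Then the discrete total energy E(t) := ⟨𝟙, e_int∘p(t)⟩_{d_c} + ½ ⟨v(t), rv(t)⟩_{d_v} is constant in t. -/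

import Mathlib

/-!
The energy has zero derivative, so it is constant on `ℝ`.

*Internal energy.* By the chain rule and `eInt' = R' Q`, its rate of change is
`⟨Q∘p, rho'⟩_{dC} = ⟨Q∘p, rG* v⟩_{dC} = ⟨rG (Q∘p), v⟩_{dV} = ⟨GRAD p, v⟩_{dV}`, using the
continuity equation, the adjoint identity `wip_wadj` and the discrete chain rule.

*Kinetic energy.* Put `a = I rho`, so that `rv = a ⊙ v` and `a' = -I (DIVr v)`. Since
`⟨v', a ⊙ v⟩ = ⟨v, rv' - a' ⊙ v⟩`, the derivative of `½⟨v, rv⟩_{dV}` is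
`⟨v, rv'⟩ - ½⟨v, a' ⊙ v⟩ = -⟨v, ADV v⟩ - ⟨v, GRAD p⟩ + ½⟨v, (I (DIVr v)) ⊙ v⟩`.
The symmetry property turns the last term into `½⟨v, (ADV + ADV*) v⟩ = ⟨v, ADV v⟩`, leaving
`-⟨v, GRAD p⟩`, which cancels the internal contribution.
-/

open Matrix BigOperators

/-- Weighted inner product on `ℝᵏ` with positive weights `d`: `⟨x, y⟩_d = ∑ i, d i * x i * y i`. -/
noncomputable def wip {k : ℕ} (d x y : Fin k → ℝ) : ℝ := ∑ i, d i * x i * y i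

/-- Weighted adjoint `A* = diag(d_in)⁻¹ Aᵀ diag(d_out)` of an `n × m` matrix `A`. -/
noncomputable def wadj {n m : ℕ} (A : Matrix (Fin n) (Fin m) ℝ)
    (dOut : Fin n → ℝ) (dIn : Fin m → ℝ) : Matrix (Fin m) (Fin n) ℝ :=
  (Matrix.diagonal dIn)⁻¹ * Aᵀ * Matrix.diagonal dOut

theorem wip_eq_dotProduct {k : ℕ} (d x y : Fin k → ℝ) :
    wip d x y = x ⬝ᵥ (Matrix.diagonal d *ᵥ y) := by
  simp only [wip, dotProduct, Matrix.mulVec_diagonal]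
  exact Finset.sum_congr rfl fun i _ => by ring

theorem wip_comm {k : ℕ} (d x y : Fin k → ℝ) : wip d x y = wip d y x :=
  Finset.sum_congr rfl fun i _ => by ring

/-- `wadj` is the adjoint for the weighted inner products; only the domain weights, which get
inverted, need to be positive. -/
theorem wip_wadj {n m : ℕ} (A : Matrix (Fin n) (Fin m) ℝ) (dOut : Fin n → ℝ)
    (dIn : Fin m → ℝ) (h : ∀ i, 0 < dIn i) (x : Fin m → ℝ) (y : Fin n → ℝ) :
    wip dIn x (wadj A dOut dIn *ᵥ y) = wip dOut (A *ᵥ x) y := by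
  have hu : IsUnit (Matrix.diagonal dIn).det := by
    rw [Matrix.det_diagonal, isUnit_iff_ne_zero]
    exact Finset.prod_ne_zero_iff.2 fun i _ => (h i).ne'
  rw [wip_eq_dotProduct, wip_eq_dotProduct, wadj, Matrix.mulVec_mulVec, Matrix.mul_assoc,
    Matrix.mul_nonsing_inv_cancel_left _ _ hu, ← Matrix.mulVec_mulVec,
    Matrix.dotProduct_mulVec, Matrix.vecMul_transpose]

/-- The symmetry property tested against `v`: the quadratic form of `A` is half that of its
weighted symmetrization `diag b`. -/
theorem two_mul_wip_mulVec {m : ℕ} (A : Matrix (Fin m) (Fin m) ℝ) (d b : Fin m → ℝ)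
    (h : ∀ i, 0 < d i) (hA : A + wadj A d d = Matrix.diagonal b) (v : Fin m → ℝ) :
    2 * wip d v (A *ᵥ v) = ∑ j, d j * v j * (b j * v j) := by
  have h1 : wip d v ((A + wadj A d d) *ᵥ v) = 2 * wip d v (A *ᵥ v) := by
    have h2 := wip_wadj A d d h v v
    rw [wip_comm d (A *ᵥ v)] at h2
    rw [Matrix.add_mulVec, wip_eq_dotProduct, Matrix.mulVec_add, dotProduct_add,
      ← wip_eq_dotProduct, ← wip_eq_dotProduct, h2]
    ring
  rw [← h1, hA]
  simp only [wip, Matrix.mulVec_diagonal]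

/-- discrete energy conservation for the isentropic compressible Euler
equations.  With `DIVr(t) := −rG(t)*`, `rho(t) := R∘p(t)`, `rv(t) := (I rho(t)) ⊙ v(t)`,
under `e_int' = R' · Q`, the continuity equation, the momentum equation, the discrete
chain rule `rG(t) (Q∘p(t)) = GRAD p(t)`, and the advection symmetry property
`ADV(t) + ADV(t)* = diag(I (DIVr(t) v(t)))`, the discrete total energy
`E(t) = ⟨𝟙, e_int∘p(t)⟩_{d_c} + ½⟨v(t), rv(t)⟩_{d_v}` is constant. -/
theorem discrete_energy_conservation_euler (n m : ℕ)
    (dC : Fin n → ℝ) (dV : Fin m → ℝ)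
    (hdC : ∀ i, 0 < dC i) (hdV : ∀ j, 0 < dV j)
    (GRAD I : Matrix (Fin m) (Fin n) ℝ)
    (rG : ℝ → Matrix (Fin m) (Fin n) ℝ)
    (ADV : ℝ → Matrix (Fin m) (Fin m) ℝ)
    (R Q eInt : ℝ → ℝ)
    (hR : Differentiable ℝ R) (hQ : Differentiable ℝ Q) (heInt : Differentiable ℝ eInt)
    (heInt' : ∀ y : ℝ, deriv eInt y = deriv R y * Q y)
    (p : ℝ → Fin n → ℝ) (v : ℝ → Fin m → ℝ)
    (hp : Differentiable ℝ p) (hvd : Differentiable ℝ v)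
    (hrho : ∀ t : ℝ,
      HasDerivAt (fun s => fun i => R (p s i))
        (-((-(wadj (rG t) dV dC)).mulVec (v t))) t)
    (hrv : ∀ t : ℝ,
      HasDerivAt (fun s => fun i => (I.mulVec (fun j => R (p s j))) i * v s i)
        (-((ADV t).mulVec (v t)) - GRAD.mulVec (p t)) t)
    (hchain : ∀ t : ℝ, (rG t).mulVec (fun i => Q (p t i)) = GRAD.mulVec (p t))
    (hsym : ∀ t : ℝ,
      ADV t + wadj (ADV t) dV dV
        = Matrix.diagonal (I.mulVec ((-(wadj (rG t) dV dC)).mulVec (v t)))) :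
    ∀ s t : ℝ,
      wip dC (fun _ => (1 : ℝ)) (fun i => eInt (p s i))
          + (1 / 2 : ℝ) * wip dV (v s) (fun i => (I.mulVec (fun j => R (p s j))) i * v s i)
        = wip dC (fun _ => (1 : ℝ)) (fun i => eInt (p t i))
          + (1 / 2 : ℝ) * wip dV (v t) (fun i => (I.mulVec (fun j => R (p t j))) i * v t i) := by
  have key : ∀ t, HasDerivAt (fun s => wip dC (fun _ => (1 : ℝ)) (fun i => eInt (p s i))
      + (1 / 2 : ℝ) * wip dV (v s)
          (fun i => (I.mulVec (fun j => R (p s j))) i * v s i)) 0 t := by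
    intro t
    set r : Fin n → ℝ := -((-(wadj (rG t) dV dC)).mulVec (v t)) with hr
    set w : Fin m → ℝ := -((ADV t).mulVec (v t)) - GRAD.mulVec (p t) with hw
    have hr' : r = wadj (rG t) dV dC *ᵥ v t := by
      rw [hr, Matrix.neg_mulVec, neg_neg]
    have hri : ∀ i, HasDerivAt (fun s => R (p s i)) (r i) t := hasDerivAt_pi.1 (hrho t)
    have hwi : ∀ j, HasDerivAt (fun s => (I.mulVec (fun i => R (p s i))) j * v s j)
        (w j) t := hasDerivAt_pi.1 (hrv t)
    have hpi := hasDerivAt_pi.1 (hp t).hasDerivAt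
    have hvi := hasDerivAt_pi.1 (hvd t).hasDerivAt
    have hE : ∀ i, HasDerivAt (fun s => eInt (p s i)) (Q (p t i) * r i) t := by
      intro i
      -- `r i` is the derivative of `R (p i)`, hence equals `deriv R (p i)` times that of `p i`.
      have h1 := (heInt (p t i)).hasDerivAt.comp t (hpi i)
      have h2 := (hR (p t i)).hasDerivAt.comp t (hpi i)
      have h3 := h2.unique (hri i)
      refine h1.congr_deriv ?_
      rw [heInt', ← h3]
      ring
    have ha : ∀ j, HasDerivAt (fun s => (I.mulVec (fun j => R (p s j))) j)
        ((I *ᵥ r) j) t := fun j =>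
      HasDerivAt.fun_sum (u := Finset.univ) fun i _ => (hri i).const_mul (I j i)
    have hpot : HasDerivAt (fun s => wip dC (fun _ => (1 : ℝ)) (fun i => eInt (p s i)))
        (wip dV (v t) (GRAD *ᵥ p t)) t := by
      have h1 : HasDerivAt (fun s => wip dC (fun _ => (1 : ℝ)) (fun i => eInt (p s i)))
          (∑ i, dC i * 1 * (Q (p t i) * r i)) t :=
        HasDerivAt.fun_sum fun i _ => (hE i).const_mul (dC i * 1)
      refine h1.congr_deriv ?_
      rw [wip_comm, ← hchain t, ← wip_wadj _ _ _ hdC, ← hr']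
      exact Finset.sum_congr rfl fun i _ => by ring
    have hkin : HasDerivAt (fun s => wip dV (v s)
          (fun i => (I.mulVec (fun j => R (p s j))) i * v s i))
        (∑ j, (2 * (dV j * v t j * w j) - dV j * v t j * ((I *ᵥ r) j * v t j))) t := by
      refine HasDerivAt.fun_sum fun j _ => ?_
      -- The product rule applied to `I rho` and `v` gives a second expression for `w j`, by which
      -- the derivative of `v` is eliminated without dividing by `I rho`.
      have h1 := ((hvi j).const_mul (dV j)).mul (hwi j)
      have h2 := ((ha j).mul (hvi j)).unique (hwi j)
      refine h1.congr_deriv ?_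
      rw [← h2]
      ring
    have hs := two_mul_wip_mulVec _ _ _ hdV (hsym t) (v t)
    have hIr : I.mulVec ((-(wadj (rG t) dV dC)).mulVec (v t)) = -(I *ᵥ r) := by
      rw [hr, Matrix.mulVec_neg, neg_neg]
    rw [hIr] at hs
    refine (hpot.add (hkin.const_mul (1 / 2 : ℝ))).congr_deriv ?_
    have hsplit : ∑ j, (2 * (dV j * v t j * w j) - dV j * v t j * ((I *ᵥ r) j * v t j))
        = -2 * wip dV (v t) (ADV t *ᵥ v t) - 2 * wip dV (v t) (GRAD *ᵥ p t)
          + ∑ j, dV j * v t j * ((-(I *ᵥ r)) j * v t j) := by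
      simp only [wip, Finset.mul_sum, ← Finset.sum_sub_distrib, ← Finset.sum_add_distrib]
      refine Finset.sum_congr rfl fun j _ => ?_
      simp only [hw, Pi.sub_apply, Pi.neg_apply]
      ring
    rw [hsplit, ← hs]
    ring
  exact is_const_of_deriv_eq_zero (fun t => (key t).differentiableAt) fun t => (key t).deriv
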